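/- Suppose the filter transition kernel Π admits a unique Π-invariant probability measure 𝕄 on P(E). Then for every probability measure 𝕄₀ on P(E) and every bounded continuous function f : P(E) → ℝ, the Cesàro averages (1/n) Σ_{k=1}^n ∫ (Π^k f) d𝕄₀ converge to ∫ f d𝕄 as n → ∞, where Π^k f denotes the k-fold iterate Π(Π^{k−1} f) with Π^0 f = f. -/

import Mathlib

open MeasureTheory Filter Topology ENNReal

/-- `P(E)`: probability vectors on a countable set `E`, with the topology of
pointwise (equivalently, weak) convergence inherited from `E → ℝ`. -/
abbrev ProbVec (E : Type*) := {p : E → ℝ // (∀ i, 0 ≤ p i) ∧ HasSum p 1}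

/-- Row-vector/matrix product `(p M(y))_j = ∑_i p_i M_{ij}(y)`. -/
noncomputable def rowMul {E F : Type*} (M : F → E → E → ℝ) (p : E → ℝ) (y : F) : E → ℝ :=
  fun j => ∑' i, p i * M y i j

/-- Iterated product `p M(y₁)⋯M(yₙ)` along a list of observations. -/
noncomputable def rowIter {E F : Type*} (M : F → E → E → ℝ) (p : E → ℝ) (ys : List F) : E → ℝ :=
  ys.foldl (rowMul M) p

/-- `p 1 = ∑_j p_j`. -/
noncomputable def rowTot {E : Type*} (p : E → ℝ) : ℝ := ∑' j, p j

/-- One step of the filter: `μ ↦ μM(y)/(μM(y)1)` (junk value `μ` when undefined). -/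
noncomputable def filterStep {E F : Type*} (M : F → E → E → ℝ) (μ : ProbVec E) (y : F) :
    ProbVec E := by
  classical
  exact if h : ∃ ν : ProbVec E, ∀ j,
      (ν : E → ℝ) j * rowTot (rowMul M (μ : E → ℝ) y) = rowMul M (μ : E → ℝ) y j
    then h.choose else μ

/-- The filter `μM(y₁)⋯M(yₙ)/(μM(y₁)⋯M(yₙ)1)` (junk value `μ` when undefined). -/
noncomputable def filterList {E F : Type*} (M : F → E → E → ℝ) (μ : ProbVec E) (ys : List F) :
    ProbVec E := by
  classical
  exact if h : ∃ ν : ProbVec E, ∀ j,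
      (ν : E → ℝ) j * rowTot (rowIter M (μ : E → ℝ) ys) = rowIter M (μ : E → ℝ) ys j
    then h.choose else μ

/-- The filter `π_n^μ(y)` as a function of the observation path `y : ℕ → F`
(the coordinate `y k` represents the observation `y_{k+1}`). -/
noncomputable def filterSeq {E F : Type*} (M : F → E → E → ℝ) (μ : ProbVec E) (y : ℕ → F)
    (n : ℕ) : ProbVec E :=
  filterList M μ (List.ofFn fun k : Fin n => y k)

/-- The filter transition kernel `Π`, acting on functions:
`Πf(μ) = ∫ f(μM(y)/(μM(y)1)) ⬝ (μM(y)1) φ(dy)`. -/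
noncomputable def filterKernel {E F : Type*} [MeasurableSpace F] (M : F → E → E → ℝ)
    (φ : Measure F) (f : ProbVec E → ℝ) (μ : ProbVec E) : ℝ :=
  ∫ y, f (filterStep M μ y) * rowTot (rowMul M (μ : E → ℝ) y) ∂φ

/-- Bounded continuous real functions on `P(E)`. -/
def IsBddCont {E : Type*} (f : ProbVec E → ℝ) : Prop :=
  Continuous f ∧ ∃ C : ℝ, ∀ μ, |f μ| ≤ C

/-- A probability measure `𝕄` on `P(E)` is `Π`-invariant if `∫ Πf d𝕄 = ∫ f d𝕄`
for every bounded continuous `f`. -/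
def IsPiInvariant {E F : Type*} [MeasurableSpace F] (M : F → E → E → ℝ) (φ : Measure F)
    (𝕄 : ProbabilityMeasure (ProbVec E)) : Prop :=
  ∀ f : ProbVec E → ℝ, IsBddCont f →
    ∫ μ, filterKernel M φ f μ ∂(𝕄 : Measure (ProbVec E)) =
      ∫ μ, f μ ∂(𝕄 : Measure (ProbVec E))

/-- The signal transition matrix `P_{ij} = ∫ M_{ij}(y) φ(dy)`. -/
noncomputable def transMat {E F : Type*} [MeasurableSpace F] (M : F → E → E → ℝ)
    (φ : Measure F) : E → E → ℝ :=
  fun i j => ∫ y, M y i j ∂φ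

/-- Powers of a transition matrix on a countable state space. -/
noncomputable def matPow {E : Type*} [DecidableEq E] (P : E → E → ℝ) : ℕ → E → E → ℝ
  | 0 => fun i j => if i = j then 1 else 0
  | n + 1 => fun i j => ∑' k, matPow P n i k * P k j

/-!
For almost every observation `y` the rows of `M(y)` have bounded sums, so both the entries and
the total mass of `μM(y)` are continuous in `μ`. Hence `μ ↦ (μM(y)1) 1_G(μM(y)/μM(y)1)` is lower
semicontinuous for every open set `G`; by Fatou's lemma so is `μ ↦ Π(μ, G)`, and `Π` is therefore
a Feller kernel.

The barycenter of a law on `P(E)` moves by the matrix `P` when the law moves by `Π`. In particular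
the barycenter `λ` of `𝕄` is stationary for `P`, and it is positive by irreducibility. For every
`ε > 0` the barycenter of an arbitrary law is at most `Cλ + r` with `r` of mass at most `ε`, and
`P` preserves this bound. Hence the barycenters of the iterated laws are tight, and by Markov's
inequality so are the laws themselves.

Consequently the Cesàro averages of the iterated laws are tight, and by the Feller property each
of their cluster points is `Π`-invariant, hence equal to `𝕄`.

The Bochner integral vanishes on nonintegrable functions, so `P` is first taken with entries in
`[0, ∞]`. Testing invariance of `𝕄` with constants and coordinates still shows `λP = λ` there, and
this together with `λ > 0` excludes infinite entries.
-/

theorem birkhoffAverage_map_eq_smul_sum_Icc (R : Type*) {α V : Type*} [DivisionSemiring R]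
    [AddCommMonoid V] [Module R V] (T : α → α) (g : α → V) (n : ℕ) (x : α) :
    birkhoffAverage R T g n (T x) = (n : R)⁻¹ • ∑ k ∈ Finset.Icc 1 n, g (T^[k] x) := by
  simp only [birkhoffAverage, birkhoffSum, ← Function.iterate_succ_apply]
  rw [Finset.range_eq_Ico]
  exact congrArg _ (Finset.sum_Ico_add' (fun k => g (T^[k] x)) 0 n 1)

section KrylovBogoliubov

open ProbabilityTheory BoundedContinuousFunction

variable {X : Type*} [MeasurableSpace X]

/-- The law at the next time of a Markov chain with kernel `κ` whose current law is `ν`. -/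
noncomputable def stepLaw (κ : Kernel X X) [IsMarkovKernel κ] (ν : ProbabilityMeasure X) :
    ProbabilityMeasure X :=
  ⟨(ν : Measure X).bind κ, inferInstance⟩

/-- The Cesàro average `(ν 0 + ⋯ + ν n) / (n + 1)` of a sequence of probability measures; the
index is shifted so that the average is never empty. -/
noncomputable def cesaroLaw (ν : ℕ → ProbabilityMeasure X) (n : ℕ) : ProbabilityMeasure X :=
  ⟨((n + 1 : ℕ) : ℝ≥0∞)⁻¹ • ∑ k ∈ Finset.range (n + 1), (ν k : Measure X), ⟨by
    simp [ENNReal.inv_mul_cancel]⟩⟩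

theorem toMeasure_cesaroLaw (ν : ℕ → ProbabilityMeasure X) (n : ℕ) :
    (cesaroLaw ν n : Measure X) =
      ((n + 1 : ℕ) : ℝ≥0∞)⁻¹ • ∑ k ∈ Finset.range (n + 1), (ν k : Measure X) :=
  rfl

variable [TopologicalSpace X]

theorem isTightMeasureSet_range_cesaroLaw {ν : ℕ → ProbabilityMeasure X}
    (hν : IsTightMeasureSet (Set.range fun n => (ν n : Measure X))) :
    IsTightMeasureSet (Set.range fun n => (cesaroLaw ν n : Measure X)) := by
  rw [isTightMeasureSet_iff_exists_isCompact_measure_compl_le] at hν ⊢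
  intro ε hε
  obtain ⟨K, hK, hKε⟩ := hν ε hε
  refine ⟨K, hK, ?_⟩
  rintro _ ⟨n, rfl⟩
  calc (cesaroLaw ν n : Measure X) Kᶜ
      = ((n + 1 : ℕ) : ℝ≥0∞)⁻¹ * ∑ k ∈ Finset.range (n + 1), (ν k : Measure X) Kᶜ := by
        simp [toMeasure_cesaroLaw]
    _ ≤ ((n + 1 : ℕ) : ℝ≥0∞)⁻¹ * ∑ _k ∈ Finset.range (n + 1), ε := by
        gcongr with k
        exact hKε _ ⟨k, rfl⟩
    _ = ε := by
        rw [Finset.sum_const, Finset.card_range, nsmul_eq_mul, ← mul_assoc,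
          ENNReal.inv_mul_cancel (by simp) (ENNReal.natCast_ne_top _), one_mul]

/-- A transition kernel is *Feller* if averaging against it preserves continuity of bounded
functions. -/
def IsFeller (κ : Kernel X X) : Prop :=
  ∀ f : X →ᵇ ℝ, Continuous fun x => ∫ y, f y ∂κ x

section OpensMeasurableSpace

variable [OpensMeasurableSpace X]

/-- The transition operator `f ↦ ∫ f dκ(·)` of a Feller Markov kernel, acting on bounded
continuous functions. -/
noncomputable def IsFeller.op {κ : Kernel X X} [IsMarkovKernel κ] (hκ : IsFeller κ)
    (f : X →ᵇ ℝ) : X →ᵇ ℝ :=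
  .ofNormedAddCommGroup (fun x => ∫ y, f y ∂κ x) (hκ f) ‖f‖ fun x => f.norm_integral_le_norm (κ x)

theorem integral_stepLaw {κ : Kernel X X} [IsMarkovKernel κ] (ν : ProbabilityMeasure X)
    (f : X →ᵇ ℝ) :
    ∫ x, f x ∂(stepLaw κ ν : Measure X) = ∫ x, ∫ y, f y ∂κ x ∂(ν : Measure X) := by
  have hf := f.integrable (stepLaw κ ν : Measure X)
  rw [stepLaw, ProbabilityMeasure.coe_mk, Measure.comp_eq_comp_const_apply] at hf ⊢
  rw [Kernel.integral_comp hf, Kernel.const_apply]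

theorem IsFeller.integral_iterate_op {κ : Kernel X X} [IsMarkovKernel κ] (hκ : IsFeller κ)
    (f : X →ᵇ ℝ) (k : ℕ) (ν : ProbabilityMeasure X) :
    ∫ x, (hκ.op^[k] f) x ∂(ν : Measure X) = ∫ x, f x ∂((stepLaw κ)^[k] ν : Measure X) := by
  induction k generalizing ν with
  | zero => rfl
  | succ k ih =>
    rw [Function.iterate_succ_apply', Function.iterate_succ_apply, ← ih]
    exact (integral_stepLaw ν _).symm

theorem integral_cesaroLaw_iterate (T : ProbabilityMeasure X → ProbabilityMeasure X)
    (ν : ProbabilityMeasure X) (f : X →ᵇ ℝ) (n : ℕ) :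
    ∫ x, f x ∂(cesaroLaw (fun k => T^[k] ν) n : Measure X) =
      birkhoffAverage ℝ T (fun ρ => ∫ x, f x ∂(ρ : Measure X)) (n + 1) ν := by
  rw [toMeasure_cesaroLaw, integral_smul_measure,
    integral_finsetSum_measure fun k _ => f.integrable _]
  rw [ENNReal.toReal_inv, ENNReal.toReal_natCast]
  rfl

theorem tendsto_integral_op_sub_integral_cesaroLaw {κ : Kernel X X} [IsMarkovKernel κ]
    (hκ : IsFeller κ) (ν : ProbabilityMeasure X) (f : X →ᵇ ℝ) :
    Tendsto (fun n => ∫ x, hκ.op f x ∂(cesaroLaw (fun k => (stepLaw κ)^[k] ν) n : Measure X) -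
      ∫ x, f x ∂(cesaroLaw (fun k => (stepLaw κ)^[k] ν) n : Measure X)) atTop (𝓝 0) := by
  have hbdd : Bornology.IsBounded
      (Set.range fun ρ : ProbabilityMeasure X => ∫ x, f x ∂(ρ : Measure X)) := by
    refine isBounded_iff_forall_norm_le.2 ⟨‖f‖, ?_⟩
    rintro _ ⟨ρ, rfl⟩
    exact f.norm_integral_le_norm _
  have hshift (n : ℕ) : birkhoffAverage ℝ (stepLaw κ) (fun ρ => ∫ x, hκ.op f x ∂(ρ : Measure X))
      n ν = birkhoffAverage ℝ (stepLaw κ) (fun ρ => ∫ x, f x ∂(ρ : Measure X)) n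
        (stepLaw κ ν) := by
    simp only [birkhoffAverage, birkhoffSum, ← Function.iterate_succ_apply,
      Function.iterate_succ_apply', integral_stepLaw]
    rfl
  simp only [integral_cesaroLaw_iterate, hshift]
  exact (tendsto_add_atTop_iff_nat 1).2
    (tendsto_birkhoffAverage_apply_sub_birkhoffAverage' ℝ hbdd (stepLaw κ) ν)

end OpensMeasurableSpace

variable [BorelSpace X] [HasOuterApproxClosed X]

theorem IsFeller.invariant_of_mapClusterPt {κ : Kernel X X} [IsMarkovKernel κ] (hκ : IsFeller κ)
    {ν ρ : ProbabilityMeasure X}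
    (hρ : MapClusterPt ρ atTop (cesaroLaw fun k => (stepLaw κ)^[k] ν)) :
    κ.Invariant (ρ : Measure X) := by
  refine ext_of_forall_integral_eq_of_IsFiniteMeasure fun f => ?_
  have hcont : Continuous fun ρ : ProbabilityMeasure X =>
      ∫ x, hκ.op f x ∂(ρ : Measure X) - ∫ x, f x ∂(ρ : Measure X) :=
    (ProbabilityMeasure.continuous_integral_boundedContinuousFunction _).sub
      (ProbabilityMeasure.continuous_integral_boundedContinuousFunction f)
  have hzero := eq_of_nhds_neBot <| ClusterPt.mono (hρ.tendsto_comp hcont.continuousAt)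
    (tendsto_integral_op_sub_integral_cesaroLaw hκ ν f)
  exact (integral_stepLaw ρ f).trans (sub_eq_zero.1 hzero)

theorem IsFeller.tendsto_birkhoffAverage_integral [T2Space X] {κ : Kernel X X}
    [IsMarkovKernel κ] (hκ : IsFeller κ) {ν ρ : ProbabilityMeasure X}
    (htight : IsTightMeasureSet (Set.range fun k => ((stepLaw κ)^[k] ν : Measure X)))
    (hρ : ∀ ρ' : ProbabilityMeasure X, κ.Invariant (ρ' : Measure X) → ρ' = ρ) (f : X →ᵇ ℝ) :
    Tendsto (fun n => birkhoffAverage ℝ (stepLaw κ) (fun ν' => ∫ x, f x ∂(ν' : Measure X)) n ν)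
      atTop (𝓝 (∫ x, f x ∂(ρ : Measure X))) := by
  have hcompact : IsCompact (closure (Set.range (cesaroLaw fun k => (stepLaw κ)^[k] ν))) := by
    refine isCompact_closure_of_isTightMeasureSet ?_
    convert isTightMeasureSet_range_cesaroLaw htight using 1
    ext
    simp
  have hlim : Tendsto (cesaroLaw fun k => (stepLaw κ)^[k] ν) atTop (𝓝 ρ) :=
    hcompact.tendsto_nhds_of_unique_mapClusterPt
      (.of_forall fun n => subset_closure ⟨n, rfl⟩)
      fun ρ' _ hρ' => hρ ρ' (hκ.invariant_of_mapClusterPt hρ')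
  refine (tendsto_add_atTop_iff_nat 1).1 ?_
  simp only [← integral_cesaroLaw_iterate]
  exact ((ProbabilityMeasure.continuous_integral_boundedContinuousFunction f).tendsto ρ).comp hlim

end KrylovBogoliubov

section FellerCriterion

open ProbabilityTheory

variable {X : Type*} [TopologicalSpace X] [FirstCountableTopology X]

theorem lowerSemicontinuous_lintegral {Y : Type*} [MeasurableSpace Y] {φ : Measure Y}
    {g : X → Y → ℝ≥0∞} (hmeas : ∀ x, Measurable (g x))
    (hlsc : ∀ᵐ y ∂φ, LowerSemicontinuous fun x => g x y) :
    LowerSemicontinuous fun x => ∫⁻ y, g x y ∂φ := by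
  refine lowerSemicontinuous_iff_le_liminf.2 fun x => ?_
  refine (lintegral_mono_ae ?_).trans (lintegral_liminf_le hmeas)
  filter_upwards [hlsc] with y hy
  exact hy.le_liminf x

theorem isFeller_of_lowerSemicontinuous [MeasurableSpace X] [OpensMeasurableSpace X]
    {κ : Kernel X X} [IsMarkovKernel κ]
    (hκ : ∀ G, IsOpen G → LowerSemicontinuous fun x => κ x G) : IsFeller κ := by
  refine fun f => continuous_iff_continuousAt.2 fun x => ?_
  let law (x' : X) : ProbabilityMeasure X := ⟨κ x', inferInstance⟩
  have hlim : Tendsto law (𝓝 x) (𝓝 (law x)) :=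
    tendsto_of_forall_isOpen_le_liminf' fun G hG => (hκ G hG).le_liminf x
  exact ProbabilityMeasure.tendsto_iff_forall_integral_tendsto.1 hlim f

end FellerCriterion

section RowVectors

variable {E : Type*}

/-- The row vector `v A` for a vector and a matrix with extended nonnegative entries. -/
noncomputable def ennRowMul (v : E → ℝ≥0∞) (A : E → E → ℝ≥0∞) : E → ℝ≥0∞ :=
  fun j => ∑' i, v i * A i j

theorem tsum_ennRowMul (v : E → ℝ≥0∞) (A : E → E → ℝ≥0∞) :
    ∑' j, ennRowMul v A j = ∑' i, v i * ∑' j, A i j := by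
  simp only [ennRowMul]
  rw [ENNReal.tsum_comm]
  simp only [ENNReal.tsum_mul_left]

theorem tsum_ennRowMul_of_tsum_eq_one (v : E → ℝ≥0∞) {A : E → E → ℝ≥0∞}
    (hA : ∀ i, ∑' j, A i j = 1) : ∑' j, ennRowMul v A j = ∑' i, v i := by
  simp only [tsum_ennRowMul, hA, mul_one]

theorem ennRowMul_ne_zero {v : E → ℝ≥0∞} {A : E → E → ℝ≥0∞} {i j : E} (hv : v i ≠ 0)
    (hA : A i j ≠ 0) : ennRowMul v A j ≠ 0 :=
  fun h => mul_ne_zero hv hA (ENNReal.tsum_eq_zero.1 h i)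

theorem measurable_ennRowMul_apply [Countable E] {Z : Type*} [MeasurableSpace Z]
    {v : Z → E → ℝ≥0∞} {A : Z → E → E → ℝ≥0∞} {j : E} (hv : ∀ i, Measurable fun z => v z i)
    (hA : ∀ i, Measurable fun z => A z i j) : Measurable fun z => ennRowMul (v z) (A z) j :=
  Measurable.tsum fun i => (hv i).mul (hA i)

theorem exists_le_mul_add_of_tsum_ne_top {v l : E → ℝ≥0∞} (hv : ∑' i, v i ≠ ∞)
    (hl₀ : ∀ i, l i ≠ 0) (hl : ∀ i, l i ≠ ∞) {ε : ℝ≥0∞} (hε : ε ≠ 0) :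
    ∃ C ≠ ∞, ∃ r : E → ℝ≥0∞, (∀ j, v j ≤ C * l j + r j) ∧ ∑' j, r j ≤ ε := by
  classical
  obtain ⟨S, hS⟩ := ((ENNReal.tendsto_tsum_compl_atTop_zero hv).eventually
    (eventually_le_nhds (pos_iff_ne_zero.2 hε))).exists
  refine ⟨∑ i ∈ S, v i / l i, ENNReal.sum_ne_top.2 fun i _ =>
    ENNReal.div_ne_top (ENNReal.ne_top_of_tsum_ne_top hv i) (hl₀ i),
    fun i => if i ∈ S then 0 else v i, fun j => ?_, ?_⟩
  · by_cases hj : j ∈ S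
    · calc v j = v j / l j * l j := (ENNReal.div_mul_cancel (hl₀ j) (hl j)).symm
        _ ≤ (∑ i ∈ S, v i / l i) * l j := by
          gcongr
          exact Finset.single_le_sum (f := fun i => v i / l i) (fun _ _ => zero_le) hj
        _ ≤ _ := le_self_add
    · simp [hj]
  · rw [← ENNReal.sum_add_tsum_compl S, Finset.sum_eq_zero fun i hi => if_pos hi, zero_add]
    exact (tsum_congr fun j => if_neg j.2).trans_le hS

theorem ennRowMul_le_mul_add {v l r : E → ℝ≥0∞} {C : ℝ≥0∞} {P : E → E → ℝ≥0∞}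
    (hl : ennRowMul l P = l) (hv : ∀ j, v j ≤ C * l j + r j) (j : E) :
    ennRowMul v P j ≤ C * l j + ennRowMul r P j := by
  calc ennRowMul v P j ≤ ∑' i, (C * (l i * P i j) + r i * P i j) :=
        ENNReal.tsum_le_tsum fun i => by
          rw [← mul_assoc, ← add_mul]
          gcongr
          exact hv i
    _ = C * ennRowMul l P j + ennRowMul r P j := by
        rw [ENNReal.tsum_add, ENNReal.tsum_mul_left]
        rfl
    _ = C * l j + ennRowMul r P j := by rw [hl]

theorem exists_finset_forall_tsum_iterate_ennRowMul_le {P : E → E → ℝ≥0∞}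
    (hP : ∀ i, ∑' j, P i j = 1) {l : E → ℝ≥0∞} (hl₀ : ∀ i, l i ≠ 0) (hl : ∑' i, l i ≠ ∞)
    (hlP : ennRowMul l P = l) {v : E → ℝ≥0∞} (hv : ∑' i, v i ≠ ∞) {ε : ℝ≥0∞} (hε : ε ≠ 0) :
    ∃ A : Finset E, ∀ k, ∑' j : {j // j ∉ A}, ((ennRowMul · P)^[k] v) j ≤ ε := by
  obtain ⟨C, hC, r₀, hr₀, hr₀ε⟩ := exists_le_mul_add_of_tsum_ne_top hv hl₀
    (ENNReal.ne_top_of_tsum_ne_top hl) (ENNReal.half_pos hε).ne'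
  have hdom (k : ℕ) : ∃ r : E → ℝ≥0∞,
      (∀ j, ((ennRowMul · P)^[k] v) j ≤ C * l j + r j) ∧ ∑' j, r j ≤ ε / 2 := by
    induction k with
    | zero => exact ⟨r₀, hr₀, hr₀ε⟩
    | succ k ih =>
      obtain ⟨r, hr, hrε⟩ := ih
      refine ⟨ennRowMul r P, ?_, (tsum_ennRowMul_of_tsum_eq_one r hP).trans_le hrε⟩
      rw [Function.iterate_succ_apply']
      exact ennRowMul_le_mul_add hlP hr
  have hCl : ∑' j, C * l j ≠ ∞ := by
    rw [ENNReal.tsum_mul_left]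
    exact ENNReal.mul_ne_top hC hl
  obtain ⟨A, hA⟩ := ((ENNReal.tendsto_tsum_compl_atTop_zero hCl).eventually
    (eventually_le_nhds (ENNReal.half_pos hε))).exists
  refine ⟨A, fun k => ?_⟩
  obtain ⟨r, hr, hrε⟩ := hdom k
  calc ∑' j : {j // j ∉ A}, ((ennRowMul · P)^[k] v) j
      ≤ ∑' j : {j // j ∉ A}, (C * l j + r j) := ENNReal.tsum_le_tsum fun j => hr j
    _ = ∑' j : {j // j ∉ A}, C * l j + ∑' j : {j // j ∉ A}, r j := ENNReal.tsum_add
    _ ≤ ε / 2 + ε / 2 := add_le_add hA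
        ((ENNReal.tsum_comp_le_tsum_of_injective Subtype.val_injective r).trans hrε)
    _ = ε := ENNReal.add_halves ε

end RowVectors

section Irreducible

variable {E : Type*}

theorem of_matPow_pos [DecidableEq E] {P : E → E → ℝ} (hP : ∀ i j, 0 ≤ P i j) {p : E → Prop}
    (hp : ∀ i j, p i → 0 < P i j → p j) {i : E} (hi : p i) (n : ℕ) {j : E}
    (hij : 0 < matPow P n i j) : p j := by
  induction n generalizing j with
  | zero =>
    by_cases h : i = j
    · exact h ▸ hi
    · simp [matPow, h] at hij
  | succ n ih =>
    obtain ⟨k, hk⟩ : ∃ k, 0 < matPow P n i k * P k j := by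
      by_contra! h
      exact (tsum_nonpos h).not_gt hij
    have hkj : 0 < P k j := (hP k j).lt_of_ne' (right_ne_zero_of_mul hk.ne')
    exact hp k j (ih (pos_of_mul_pos_left hk (hP k j))) hkj

theorem ne_zero_of_ennRowMul_eq_self [DecidableEq E] {P : E → E → ℝ≥0∞} {l : E → ℝ≥0∞}
    (hirr : ∀ i j, ∃ n, 0 < matPow (fun i j => (P i j).toReal) n i j) (hl : ∑' i, l i ≠ 0)
    (hlP : ennRowMul l P = l) (j : E) : l j ≠ 0 := by
  obtain ⟨i, hi⟩ : ∃ i, l i ≠ 0 := by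
    by_contra! h
    exact hl (ENNReal.tsum_eq_zero.2 h)
  obtain ⟨n, hn⟩ := hirr i j
  refine of_matPow_pos (p := (l · ≠ 0)) (fun _ _ => ENNReal.toReal_nonneg)
    (fun i j hi hij => ?_) hi n hn
  rw [← hlP]
  exact ennRowMul_ne_zero hi (ENNReal.toReal_pos_iff.1 hij).1.ne'

theorem ne_top_of_ennRowMul_eq_self {P : E → E → ℝ≥0∞} {l : E → ℝ≥0∞} (hl₀ : ∀ i, l i ≠ 0)
    (hl : ∑' i, l i ≠ ∞) (hlP : ennRowMul l P = l) (i j : E) : P i j ≠ ∞ := by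
  have hj : ∑' i, l i * P i j ≠ ∞ :=
    (congrFun hlP j).trans_ne (ENNReal.ne_top_of_tsum_ne_top hl j)
  exact (ENNReal.lt_top_of_mul_ne_top_right (ENNReal.ne_top_of_tsum_ne_top hj i) (hl₀ i)).ne

end Irreducible

namespace ProbVec

variable {E : Type*}

instance [Countable E] : SecondCountableTopology (ProbVec E) :=
  IsInducing.subtypeVal.secondCountableTopology

/-- The weights of a probability vector as extended nonnegative reals, where sums and integrals
always make sense. -/
noncomputable def mass (μ : ProbVec E) (i : E) : ℝ≥0∞ :=
  ENNReal.ofReal (μ.1 i)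

theorem toReal_mass (μ : ProbVec E) (i : E) : (μ.mass i).toReal = μ.1 i :=
  ENNReal.toReal_ofReal (μ.2.1 i)

theorem mass_ne_top (μ : ProbVec E) (i : E) : μ.mass i ≠ ∞ :=
  ENNReal.ofReal_ne_top

theorem tsum_mass (μ : ProbVec E) : ∑' i, μ.mass i = 1 := by
  simp only [mass]
  rw [← ENNReal.ofReal_tsum_of_nonneg μ.2.1 μ.2.2.summable, μ.2.2.tsum_eq, ENNReal.ofReal_one]

theorem coe_le_one (μ : ProbVec E) (i : E) : μ.1 i ≤ 1 :=
  le_hasSum μ.2.2 i fun j _ => μ.2.1 j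

theorem measurable_mass (i : E) : Measurable fun μ : ProbVec E => μ.mass i :=
  ((measurable_pi_apply i).comp measurable_subtype_coe).ennreal_ofReal

theorem measurable_tsum_mass_mul [Countable E] (a : E → ℝ≥0∞) :
    Measurable fun μ : ProbVec E => ∑' i, μ.mass i * a i :=
  Measurable.tsum fun i => (measurable_mass i).mul_const _

theorem continuous_coe_apply (i : E) : Continuous fun μ : ProbVec E => μ.1 i :=
  (continuous_apply i).comp continuous_subtype_val

theorem lowerSemicontinuous_tsum_mass_mul {a : E → ℝ≥0∞} (ha : ∀ i, a i ≠ ∞) :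
    LowerSemicontinuous fun μ : ProbVec E => ∑' i, μ.mass i * a i :=
  lowerSemicontinuous_tsum fun i => Continuous.lowerSemicontinuous <|
    (ENNReal.continuous_mul_const (ha i)).comp
      (ENNReal.continuous_ofReal.comp (continuous_coe_apply i))

theorem tsum_mass_mul_le (μ : ProbVec E) {a : E → ℝ≥0∞} {C : ℝ≥0∞} (ha : ∀ i, a i ≤ C) :
    ∑' i, μ.mass i * a i ≤ C :=
  calc ∑' i, μ.mass i * a i ≤ ∑' i, μ.mass i * C := by gcongr; exact ha _
    _ = C := by rw [ENNReal.tsum_mul_right, tsum_mass, one_mul]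

theorem tsum_mass_mul_eq_one (μ : ProbVec E) {a : E → ℝ≥0∞}
    (ha : ∀ i, a i ≠ ∞ → a i = 1) (h : ∑' i, μ.mass i * a i ≠ ∞) : ∑' i, μ.mass i * a i = 1 := by
  rw [← μ.tsum_mass]
  refine tsum_congr fun i => ?_
  by_cases hi : μ.mass i = 0
  · rw [hi, zero_mul]
  · rw [ha i (ENNReal.lt_top_of_mul_ne_top_right (ENNReal.ne_top_of_tsum_ne_top h i) hi).ne,
      mul_one]

-- The defect `C - a` gives a second lower semicontinuous sum, and the two add up to `C`.
theorem continuous_tsum_mass_mul {a : E → ℝ≥0∞} {C : ℝ≥0∞} (ha : ∀ i, a i ≤ C) (hC : C ≠ ∞) :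
    Continuous fun μ : ProbVec E => ∑' i, μ.mass i * a i := by
  rw [continuous_iff_lower_upperSemicontinuous]
  refine ⟨lowerSemicontinuous_tsum_mass_mul fun i => ne_top_of_le_ne_top hC (ha i), ?_⟩
  have hdefect : LowerSemicontinuous fun μ : ProbVec E => ∑' i, μ.mass i * (C - a i) :=
    lowerSemicontinuous_tsum_mass_mul fun i => ne_top_of_le_ne_top hC tsub_le_self
  have husc : UpperSemicontinuous fun μ : ProbVec E => C - ∑' i, μ.mass i * (C - a i) :=
    (ENNReal.continuous_sub_left hC).comp_lowerSemicontinuous_antitone hdefect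
      fun _ _ h => tsub_le_tsub_left h C
  convert husc using 2 with μ
  refine ENNReal.eq_sub_of_add_eq
    (ne_top_of_le_ne_top hC (μ.tsum_mass_mul_le fun i => tsub_le_self)) ?_
  simp only [← ENNReal.tsum_add, ← mul_add, add_tsub_cancel_of_le (ha _),
    ENNReal.tsum_mul_right, tsum_mass, one_mul]

section Normalize

open Classical in
/-- The probability vector proportional to `v`, with junk value `ν₀` if the total mass of `v` is
zero or infinite. -/
noncomputable def normalize (ν₀ : ProbVec E) (v : E → ℝ≥0∞) : ProbVec E :=
  if h : ∑' i, v i ≠ 0 ∧ ∑' i, v i ≠ ∞ then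
    ⟨fun j => (v j / ∑' i, v i).toReal, fun _ => ENNReal.toReal_nonneg, by
      have hsum : ∑' j, v j / ∑' i, v i = 1 := by
        simp only [div_eq_mul_inv, ENNReal.tsum_mul_right, ENNReal.mul_inv_cancel h.1 h.2]
      have hfin : ∑' j, v j / ∑' i, v i ≠ ∞ := hsum ▸ one_ne_top
      have htoReal := ENNReal.hasSum_toReal hfin
      rwa [← ENNReal.tsum_toReal_eq (ENNReal.ne_top_of_tsum_ne_top hfin), hsum,
        ENNReal.toReal_one] at htoReal⟩
  else ν₀

theorem normalize_apply_of_ne {v : E → ℝ≥0∞} (ν₀ : ProbVec E) (h₀ : ∑' i, v i ≠ 0)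
    (h : ∑' i, v i ≠ ∞) (j : E) : (normalize ν₀ v).1 j = (v j / ∑' i, v i).toReal := by
  rw [normalize, dif_pos ⟨h₀, h⟩]

open Classical in
theorem normalize_apply (ν₀ : ProbVec E) (v : E → ℝ≥0∞) (j : E) :
    (normalize ν₀ v).1 j =
      if ∑' i, v i ≠ 0 ∧ ∑' i, v i ≠ ∞ then (v j / ∑' i, v i).toReal else ν₀.1 j := by
  rw [normalize]
  split_ifs <;> rfl

theorem mass_normalize_mul_tsum (ν₀ : ProbVec E) {v : E → ℝ≥0∞} (hv : ∑' i, v i ≠ ∞) (j : E) :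
    (normalize ν₀ v).mass j * ∑' i, v i = v j := by
  by_cases h₀ : ∑' i, v i = 0
  · rw [h₀, mul_zero, ENNReal.tsum_eq_zero.1 h₀ j]
  · rw [mass, normalize_apply_of_ne ν₀ h₀ hv, ENNReal.ofReal_toReal
      (ENNReal.div_ne_top (ENNReal.ne_top_of_tsum_ne_top hv j) h₀), ENNReal.div_mul_cancel h₀ hv]

theorem measurable_normalize [Countable E] {Z : Type*} [MeasurableSpace Z] {ν₀ : Z → ProbVec E}
    {v : Z → E → ℝ≥0∞} (hν₀ : Measurable ν₀) (hv : ∀ i, Measurable fun z => v z i) :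
    Measurable fun z => normalize (ν₀ z) (v z) := by
  refine measurable_comap_iff.2 (measurable_pi_lambda _ fun j => ?_)
  have htot : Measurable fun z => ∑' i, v z i := Measurable.tsum hv
  simp only [Function.comp_apply, normalize_apply]
  exact Measurable.ite
    ((htot (measurableSet_singleton 0).compl).inter (htot (measurableSet_singleton ∞).compl))
    ((hv j).div htot).ennreal_toReal
    ((measurable_pi_apply j).comp (measurable_subtype_coe.comp hν₀))

theorem continuousAt_normalize {X : Type*} [TopologicalSpace X] {ν₀ : X → ProbVec E}
    {v : X → E → ℝ≥0∞} {x : X} (hv : ∀ i, ContinuousAt (fun x => v x i) x)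
    (htot : ContinuousAt (fun x => ∑' i, v x i) x) (h₀ : ∑' i, v x i ≠ 0)
    (h : ∑' i, v x i ≠ ∞) : ContinuousAt (fun x => normalize (ν₀ x) (v x)) x := by
  rw [ContinuousAt, tendsto_subtype_rng, tendsto_pi_nhds]
  intro j
  have hj : v x j ≠ ∞ := ENNReal.ne_top_of_tsum_ne_top h j
  rw [normalize_apply_of_ne _ h₀ h]
  refine ((ENNReal.tendsto_toReal (ENNReal.div_ne_top hj h₀)).comp
    (ENNReal.Tendsto.div (hv j) (.inr h₀) htot (.inr hj))).congr' ?_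
  filter_upwards [htot.eventually_ne h₀, htot.eventually_ne h] with x' h₀' h'
  exact (normalize_apply_of_ne _ h₀' h' j).symm

end Normalize

section Tightness

theorem tsum_mass_compl (μ : ProbVec E) (A : Finset E) :
    ∑' j : {j // j ∉ A}, μ.mass j = ENNReal.ofReal (1 - ∑ i ∈ A, μ.1 i) := by
  have hhead : ∑ i ∈ A, μ.mass i = ENNReal.ofReal (∑ i ∈ A, μ.1 i) :=
    (ENNReal.ofReal_sum_of_nonneg fun i _ => μ.2.1 i).symm
  rw [ENNReal.ofReal_sub _ (Finset.sum_nonneg fun i _ => μ.2.1 i), ENNReal.ofReal_one,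
    ← μ.tsum_mass, ← ENNReal.sum_add_tsum_compl A μ.mass, hhead,
    ENNReal.add_sub_cancel_left ENNReal.ofReal_ne_top]
  rfl

theorem isCompact_setOf_forall_one_le_sum_add (A : ℕ → Finset E) {ε : ℕ → ℝ}
    (hε : Tendsto ε atTop (𝓝 0)) :
    IsCompact {μ : ProbVec E | ∀ m, 1 ≤ ∑ i ∈ A m, μ.1 i + ε m} := by
  have himage : (Subtype.val : ProbVec E → E → ℝ) ''
      {μ : ProbVec E | ∀ m, 1 ≤ ∑ i ∈ A m, μ.1 i + ε m} =
      (Set.univ.pi fun _ => Set.Icc (0 : ℝ) 1) ∩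
        ({p | ∀ s : Finset E, ∑ i ∈ s, p i ≤ 1} ∩ {p | ∀ m, 1 ≤ ∑ i ∈ A m, p i + ε m}) := by
    ext p
    constructor
    · rintro ⟨μ, hμ, rfl⟩
      exact ⟨fun i _ => ⟨μ.2.1 i, coe_le_one μ i⟩,
        fun s => sum_le_hasSum s (fun i _ => μ.2.1 i) μ.2.2, hμ⟩
    · rintro ⟨hIcc, hle, hge⟩
      have hnonneg (i : E) : 0 ≤ p i := (hIcc i trivial).1
      have hsummable : Summable p := summable_of_sum_le hnonneg hle
      have hlim : Tendsto (fun m => ∑' i, p i + ε m) atTop (𝓝 (∑' i, p i)) := by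
        simpa only [add_zero] using tendsto_const_nhds.add hε
      have hone : ∑' i, p i = 1 := le_antisymm (hsummable.tsum_le_of_sum_le hle) <|
        ge_of_tendsto' hlim fun m => (hge m).trans <| by
          gcongr
          exact hsummable.sum_le_tsum _ fun i _ => hnonneg i
      exact ⟨⟨p, hnonneg, hone ▸ hsummable.hasSum⟩, hge, rfl⟩
  rw [Subtype.isCompact_iff, himage]
  refine (isCompact_univ_pi fun _ => isCompact_Icc).inter_right (IsClosed.inter ?_ ?_)
  · simp only [Set.ofPred_forall]
    exact isClosed_iInter fun s => isClosed_le (by fun_prop) continuous_const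
  · simp only [Set.ofPred_forall]
    exact isClosed_iInter fun m => isClosed_le continuous_const (by fun_prop)

theorem isTightMeasureSet_of_lintegral_tsum_mass_compl_le [Countable E]
    {S : Set (Measure (ProbVec E))}
    (hS : ∀ ε : ℝ≥0∞, ε ≠ 0 →
      ∃ A : Finset E, ∀ ν ∈ S, ∫⁻ μ, ∑' j : {j // j ∉ A}, μ.mass j ∂ν ≤ ε) :
    IsTightMeasureSet S := by
  rw [isTightMeasureSet_iff_exists_isCompact_measure_compl_le]
  intro ε hε
  obtain ⟨δ, hδ₀, hδ⟩ := ENNReal.exists_pos_sum_of_countable' hε.ne' ℕ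
  let η (m : ℕ) : ℝ := 1 / ((m : ℝ) + 1)
  have hη (m : ℕ) : ENNReal.ofReal (η m) ≠ 0 :=
    (ENNReal.ofReal_pos.2 Nat.one_div_pos_of_nat).ne'
  choose A hA using fun m => hS (δ m * ENNReal.ofReal (η m)) (mul_ne_zero (hδ₀ m).ne' (hη m))
  refine ⟨_, isCompact_setOf_forall_one_le_sum_add A tendsto_one_div_add_atTop_nhds_zero_nat,
    fun ν hν => ?_⟩
  have hsub : {μ : ProbVec E | ∀ m, 1 ≤ ∑ i ∈ A m, μ.1 i + η m}ᶜ ⊆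
      ⋃ m, {μ | ENNReal.ofReal (η m) ≤ ∑' j : {j // j ∉ A m}, μ.mass j} := by
    intro μ hμ
    simp only [Set.mem_compl_iff, Set.mem_ofPred_eq, not_forall, not_le] at hμ
    obtain ⟨m, hm⟩ := hμ
    refine Set.mem_iUnion.2 ⟨m, ?_⟩
    rw [Set.mem_ofPred_eq, tsum_mass_compl]
    exact ENNReal.ofReal_le_ofReal (by linarith)
  have hmeas (m : ℕ) : Measurable fun μ : ProbVec E => ∑' j : {j // j ∉ A m}, μ.mass j :=
    Measurable.tsum fun j => measurable_mass j.1
  calc ν {μ : ProbVec E | ∀ m, 1 ≤ ∑ i ∈ A m, μ.1 i + η m}ᶜ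
      ≤ ∑' m, ν {μ | ENNReal.ofReal (η m) ≤ ∑' j : {j // j ∉ A m}, μ.mass j} :=
        (measure_mono hsub).trans (measure_iUnion_le _)
    _ ≤ ∑' m, δ m := ENNReal.tsum_le_tsum fun m =>
        (meas_ge_le_lintegral_div (hmeas m).aemeasurable (hη m) ENNReal.ofReal_ne_top).trans
          (ENNReal.div_le_of_le_mul (hA m ν hν))
    _ ≤ ε := hδ.le

end Tightness

end ProbVec

section Barycenter

variable {E : Type*}

/-- The mean `∫ μ ν(dμ)` of a law `ν` on `P(E)`. -/
noncomputable def barycenter (ν : ProbabilityMeasure (ProbVec E)) (j : E) : ℝ≥0∞ :=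
  ∫⁻ μ, μ.mass j ∂(ν : Measure (ProbVec E))

theorem tsum_barycenter_subtype [Countable E] (s : Set E) (ν : ProbabilityMeasure (ProbVec E)) :
    ∑' j : s, barycenter ν j = ∫⁻ μ, ∑' j : s, μ.mass j ∂(ν : Measure (ProbVec E)) :=
  (lintegral_tsum fun j : s => (ProbVec.measurable_mass j.1).aemeasurable).symm

theorem tsum_barycenter [Countable E] (ν : ProbabilityMeasure (ProbVec E)) :
    ∑' j, barycenter ν j = 1 := by
  simp only [barycenter]
  rw [← lintegral_tsum fun j => (ProbVec.measurable_mass j).aemeasurable]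
  simp only [ProbVec.tsum_mass, lintegral_one, measure_univ]

theorem toReal_barycenter (ν : ProbabilityMeasure (ProbVec E)) (j : E) :
    (barycenter ν j).toReal = ∫ μ, μ.1 j ∂(ν : Measure (ProbVec E)) := by
  rw [barycenter, ← integral_toReal (ProbVec.measurable_mass j).aemeasurable
    (.of_forall fun μ => (μ.mass_ne_top j).lt_top)]
  simp only [ProbVec.toReal_mass]

theorem ennRowMul_barycenter [Countable E] (ν : ProbabilityMeasure (ProbVec E))
    (P : E → E → ℝ≥0∞) (j : E) :
    ennRowMul (barycenter ν) P j = ∫⁻ μ, ennRowMul μ.mass P j ∂(ν : Measure (ProbVec E)) := by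
  simp only [ennRowMul, barycenter]
  rw [lintegral_tsum fun i => ((ProbVec.measurable_mass i).mul_const _).aemeasurable]
  exact tsum_congr fun i => (lintegral_mul_const _ (ProbVec.measurable_mass i)).symm

-- `toReal` sends infinite values to `0`, so its integral detects them.
theorem ae_tsum_mass_mul_eq_one [Countable E] {ν : ProbabilityMeasure (ProbVec E)} {a : E → ℝ≥0∞}
    (ha : ∀ i, a i ≠ ∞ → a i = 1)
    (hν : ∫ μ, (∑' i, μ.mass i * a i).toReal ∂(ν : Measure (ProbVec E)) = 1) :
    ∀ᵐ μ ∂(ν : Measure (ProbVec E)), ∑' i, μ.mass i * a i = 1 := by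
  have hle (μ : ProbVec E) : (∑' i, μ.mass i * a i).toReal ≤ 1 := by
    by_cases h : ∑' i, μ.mass i * a i = ∞
    · simp only [h, ENNReal.toReal_top, zero_le_one]
    · rw [μ.tsum_mass_mul_eq_one ha h, ENNReal.toReal_one]
  have hint : Integrable (fun μ : ProbVec E => (∑' i, μ.mass i * a i).toReal)
      (ν : Measure (ProbVec E)) := .of_integral_ne_zero (by simp [hν])
  have hae := (integral_eq_iff_of_ae_le hint (integrable_const 1) (.of_forall hle)).1
    (by simpa using hν)
  filter_upwards [hae] with μ hμ
  exact (ENNReal.toReal_eq_one_iff _).1 hμ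

theorem ennRowMul_barycenter_eq_self [Countable E] {ν : ProbabilityMeasure (ProbVec E)}
    {P : E → E → ℝ≥0∞} (hP : ∀ i, ∑' j, P i j ≠ ∞ → ∑' j, P i j = 1)
    (hmass : ∫ μ, (∑' i, μ.mass i * ∑' j, P i j).toReal ∂(ν : Measure (ProbVec E)) = 1)
    (hcoord : ∀ j, ∫ μ, (ennRowMul μ.mass P j).toReal ∂(ν : Measure (ProbVec E)) =
      ∫ μ, μ.1 j ∂(ν : Measure (ProbVec E))) :
    ennRowMul (barycenter ν) P = barycenter ν := by
  funext j
  have hle : ∀ᵐ μ ∂(ν : Measure (ProbVec E)), ennRowMul μ.mass P j ≤ 1 := by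
    filter_upwards [ae_tsum_mass_mul_eq_one hP hmass] with μ hμ
    rw [← hμ, ← tsum_ennRowMul]
    exact ENNReal.le_tsum j
  have hfin : ennRowMul (barycenter ν) P j ≠ ∞ := by
    rw [ennRowMul_barycenter]
    refine ne_top_of_le_ne_top one_ne_top ((lintegral_mono_ae hle).trans_eq ?_)
    rw [lintegral_one, measure_univ]
  have hfin' : barycenter ν j ≠ ∞ :=
    ENNReal.ne_top_of_tsum_ne_top (tsum_barycenter ν ▸ one_ne_top) j
  rw [← ENNReal.toReal_eq_toReal_iff' hfin hfin', toReal_barycenter, ← hcoord,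
    ennRowMul_barycenter]
  exact (integral_toReal (ProbVec.measurable_tsum_mass_mul _).aemeasurable
    (hle.mono fun μ hμ => hμ.trans_lt one_lt_top)).symm

end Barycenter

section FilterTransition

open ProbabilityTheory

variable {E F : Type*} {K : F → E → E → ℝ≥0∞}

/-- The row sums of the matrix `A` are uniformly bounded. -/
def HasBoundedRows (A : E → E → ℝ≥0∞) : Prop :=
  ∃ C ≠ ∞, ∀ i, ∑' j, A i j ≤ C

/-- The total mass `μ K(y) 1` of the unnormalized filter, which is the density with respect to the
reference measure of the next observation when the signal has law `μ`. -/
noncomputable def filterDensity (K : F → E → E → ℝ≥0∞) (μ : ProbVec E) (y : F) : ℝ≥0∞ :=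
  ∑' j, ennRowMul μ.mass (K y) j

/-- The updated filter `μ K(y) / (μ K(y) 1)`, with junk value `μ` if the denominator is zero or
infinite. -/
noncomputable def filterUpdate (K : F → E → E → ℝ≥0∞) (μ : ProbVec E) (y : F) : ProbVec E :=
  ProbVec.normalize μ (ennRowMul μ.mass (K y))

theorem filterDensity_eq (μ : ProbVec E) (y : F) :
    filterDensity K μ y = ∑' i, μ.mass i * ∑' j, K y i j :=
  tsum_ennRowMul _ _

theorem HasBoundedRows.filterDensity_ne_top {y : F} (hy : HasBoundedRows (K y))
    (μ : ProbVec E) : filterDensity K μ y ≠ ∞ := by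
  obtain ⟨C, hC, hrow⟩ := hy
  rw [filterDensity_eq]
  exact ne_top_of_le_ne_top hC (μ.tsum_mass_mul_le hrow)

theorem HasBoundedRows.mass_filterUpdate_mul_filterDensity {y : F} (hy : HasBoundedRows (K y))
    (μ : ProbVec E) (j : E) :
    (filterUpdate K μ y).mass j * filterDensity K μ y = ennRowMul μ.mass (K y) j :=
  ProbVec.mass_normalize_mul_tsum μ (hy.filterDensity_ne_top μ) j

theorem HasBoundedRows.continuous_filterDensity {y : F} (hy : HasBoundedRows (K y)) :
    Continuous fun μ => filterDensity K μ y := by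
  obtain ⟨C, hC, hrow⟩ := hy
  simp only [filterDensity_eq]
  exact ProbVec.continuous_tsum_mass_mul hrow hC

theorem HasBoundedRows.continuousAt_filterUpdate {y : F} (hy : HasBoundedRows (K y))
    {μ : ProbVec E} (hμ : filterDensity K μ y ≠ 0) :
    ContinuousAt (fun μ => filterUpdate K μ y) μ := by
  have hcoord (j : E) : Continuous fun μ : ProbVec E => ennRowMul μ.mass (K y) j := by
    obtain ⟨C, hC, hrow⟩ := hy
    exact ProbVec.continuous_tsum_mass_mul (fun i => (ENNReal.le_tsum j).trans (hrow i)) hC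
  exact ProbVec.continuousAt_normalize (fun j => (hcoord j).continuousAt)
    hy.continuous_filterDensity.continuousAt hμ (hy.filterDensity_ne_top μ)

theorem HasBoundedRows.lowerSemicontinuous_filterDensity_mul_indicator {y : F}
    (hy : HasBoundedRows (K y)) {G : Set (ProbVec E)} (hG : IsOpen G) :
    LowerSemicontinuous fun μ => filterDensity K μ y * G.indicator 1 (filterUpdate K μ y) := by
  intro μ a ha
  have hμ₀ : filterDensity K μ y ≠ 0 := left_ne_zero_of_mul ha.ne_bot
  have hμG : filterUpdate K μ y ∈ G := by
    by_contra hμG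
    simp [Set.indicator_of_notMem hμG] at ha
  simp only [Set.indicator_of_mem hμG, Pi.one_apply, mul_one] at ha
  filter_upwards [hy.continuous_filterDensity.continuousAt.eventually (lt_mem_nhds ha),
    (hy.continuousAt_filterUpdate hμ₀).eventually (hG.mem_nhds hμG)] with ν hν hνG
  simpa only [Set.indicator_of_mem hνG, Pi.one_apply, mul_one] using hν

variable [MeasurableSpace F]

/-- The transition matrix `∫ K_{ij}(y) φ(dy)` of the signal, with extended nonnegative entries so
that it is meaningful before its finiteness is known. -/
noncomputable def meanMat (K : F → E → E → ℝ≥0∞) (φ : Measure F) (i j : E) : ℝ≥0∞ :=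
  ∫⁻ y, K y i j ∂φ

/-- The law of the filter after one step started from `μ`, as a measure. -/
noncomputable def filterLaw (K : F → E → E → ℝ≥0∞) (φ : Measure F) (μ : ProbVec E) :
    Measure (ProbVec E) :=
  (φ.withDensity (filterDensity K μ)).map (filterUpdate K μ)

variable [Countable E] {φ : Measure F} (hK : ∀ i j, Measurable fun y => K y i j)
include hK

theorem measurable_ennRowMul_mass (j : E) :
    Measurable fun z : ProbVec E × F => ennRowMul z.1.mass (K z.2) j :=
  measurable_ennRowMul_apply (fun i => (ProbVec.measurable_mass i).comp measurable_fst)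
    fun i => (hK i j).comp measurable_snd

theorem measurable_filterDensity :
    Measurable fun z : ProbVec E × F => filterDensity K z.1 z.2 :=
  Measurable.tsum fun j => measurable_ennRowMul_mass hK j

theorem measurable_filterUpdate :
    Measurable fun z : ProbVec E × F => filterUpdate K z.1 z.2 :=
  ProbVec.measurable_normalize measurable_fst fun j => measurable_ennRowMul_mass hK j

theorem measurable_filterDensity_right (μ : ProbVec E) : Measurable (filterDensity K μ) :=
  (measurable_filterDensity hK).comp measurable_prodMk_left

theorem measurable_ennRowMul_mass_right (μ : ProbVec E) (j : E) :
    Measurable fun y => ennRowMul μ.mass (K y) j :=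
  (measurable_ennRowMul_mass hK j).comp measurable_prodMk_left

theorem measurable_filterUpdate_right (μ : ProbVec E) : Measurable (filterUpdate K μ) :=
  (measurable_filterUpdate hK).comp measurable_prodMk_left

theorem lintegral_ennRowMul_mass (μ : ProbVec E) (j : E) :
    ∫⁻ y, ennRowMul μ.mass (K y) j ∂φ = ennRowMul μ.mass (meanMat K φ) j := by
  simp only [ennRowMul, meanMat]
  rw [lintegral_tsum fun i => ((hK i j).const_mul _).aemeasurable]
  exact tsum_congr fun i => lintegral_const_mul _ (hK i j)

theorem lintegral_filterDensity (μ : ProbVec E) :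
    ∫⁻ y, filterDensity K μ y ∂φ = ∑' i, μ.mass i * ∑' j, meanMat K φ i j := by
  simp only [filterDensity]
  rw [lintegral_tsum fun j => (measurable_ennRowMul_mass_right hK μ j).aemeasurable,
    ← tsum_ennRowMul]
  exact tsum_congr fun j => lintegral_ennRowMul_mass hK μ j

theorem lintegral_filterLaw (μ : ProbVec E) {g : ProbVec E → ℝ≥0∞} (hg : Measurable g) :
    ∫⁻ ν, g ν ∂filterLaw K φ μ =
      ∫⁻ y, filterDensity K μ y * g (filterUpdate K μ y) ∂φ := by
  rw [filterLaw, lintegral_map hg (measurable_filterUpdate_right hK μ)]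
  exact lintegral_withDensity_eq_lintegral_mul _ (measurable_filterDensity_right hK μ)
    (hg.comp (measurable_filterUpdate_right hK μ))

theorem filterLaw_apply (μ : ProbVec E) {G : Set (ProbVec E)} (hG : MeasurableSet G) :
    filterLaw K φ μ G =
      ∫⁻ y, filterDensity K μ y * G.indicator 1 (filterUpdate K μ y) ∂φ := by
  rw [← lintegral_filterLaw hK μ (measurable_one.indicator hG), lintegral_indicator_one hG]

theorem measurable_filterDensity_mul_indicator {G : Set (ProbVec E)} (hG : MeasurableSet G) :
    Measurable fun z : ProbVec E × F =>
      filterDensity K z.1 z.2 * G.indicator 1 (filterUpdate K z.1 z.2) :=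
  (measurable_filterDensity hK).mul
    ((measurable_one.indicator hG).comp (measurable_filterUpdate hK))

theorem measurable_filterLaw [SFinite φ] : Measurable (filterLaw K φ) := by
  refine Measure.measurable_of_measurable_coe _ fun G hG => ?_
  simp only [filterLaw_apply hK _ hG]
  exact (measurable_filterDensity_mul_indicator hK hG).lintegral_prod_right'

theorem isProbabilityMeasure_filterLaw (hP : ∀ i, ∑' j, meanMat K φ i j = 1) (μ : ProbVec E) :
    IsProbabilityMeasure (filterLaw K φ μ) := by
  refine ⟨?_⟩
  rw [← lintegral_one, lintegral_filterLaw hK μ measurable_const]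
  simp only [mul_one, lintegral_filterDensity hK, hP, ProbVec.tsum_mass]

theorem lintegral_mass_filterLaw (hbdd : ∀ᵐ y ∂φ, HasBoundedRows (K y)) (μ : ProbVec E) (j : E) :
    ∫⁻ ν, ν.mass j ∂filterLaw K φ μ = ennRowMul μ.mass (meanMat K φ) j := by
  rw [lintegral_filterLaw hK μ (ProbVec.measurable_mass j), ← lintegral_ennRowMul_mass hK]
  refine lintegral_congr_ae ?_
  filter_upwards [hbdd] with y hy
  rw [mul_comm, hy.mass_filterUpdate_mul_filterDensity]

theorem integral_filterLaw (hbdd : ∀ᵐ y ∂φ, HasBoundedRows (K y)) (μ : ProbVec E)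
    {f : ProbVec E → ℝ} (hf : Measurable f) :
    ∫ ν, f ν ∂filterLaw K φ μ =
      ∫ y, f (filterUpdate K μ y) * (filterDensity K μ y).toReal ∂φ := by
  rw [filterLaw, integral_map (measurable_filterUpdate_right hK μ).aemeasurable
    hf.aestronglyMeasurable,
    integral_withDensity_eq_integral_toReal_smul (measurable_filterDensity_right hK μ)
    (hbdd.mono fun y hy => (hy.filterDensity_ne_top μ).lt_top)]
  simp only [smul_eq_mul, mul_comm]

variable (φ) in
/-- The transition kernel of the filter, as a kernel of measures on `P(E)`. -/
noncomputable def filterTransition [SFinite φ] : Kernel (ProbVec E) (ProbVec E) :=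
  ⟨filterLaw K φ, measurable_filterLaw hK⟩

theorem filterTransition_apply [SFinite φ] (μ : ProbVec E) :
    filterTransition φ hK μ = filterLaw K φ μ :=
  rfl

theorem isMarkovKernel_filterTransition [SFinite φ] (hP : ∀ i, ∑' j, meanMat K φ i j = 1) :
    IsMarkovKernel (filterTransition φ hK) :=
  ⟨isProbabilityMeasure_filterLaw hK hP⟩

theorem isFeller_filterTransition [SFinite φ] [IsMarkovKernel (filterTransition φ hK)]
    (hbdd : ∀ᵐ y ∂φ, HasBoundedRows (K y)) : IsFeller (filterTransition φ hK) := by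
  refine isFeller_of_lowerSemicontinuous fun G hG => ?_
  simp only [filterTransition_apply, filterLaw_apply hK _ hG.measurableSet]
  refine lowerSemicontinuous_lintegral (fun μ =>
    (measurable_filterDensity_mul_indicator hK hG.measurableSet).comp measurable_prodMk_left) ?_
  filter_upwards [hbdd] with y hy
  exact hy.lowerSemicontinuous_filterDensity_mul_indicator hG

theorem barycenter_stepLaw [SFinite φ] [IsMarkovKernel (filterTransition φ hK)]
    (hbdd : ∀ᵐ y ∂φ, HasBoundedRows (K y)) (ν : ProbabilityMeasure (ProbVec E)) :
    barycenter (stepLaw (filterTransition φ hK) ν) =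
      ennRowMul (barycenter ν) (meanMat K φ) := by
  funext j
  calc barycenter (stepLaw (filterTransition φ hK) ν) j
      = ∫⁻ μ, ∫⁻ μ', μ'.mass j ∂filterLaw K φ μ ∂(ν : Measure (ProbVec E)) :=
        Measure.lintegral_bind (filterTransition φ hK).aemeasurable
          (ProbVec.measurable_mass j).aemeasurable
    _ = ennRowMul (barycenter ν) (meanMat K φ) j := by
        simp only [lintegral_mass_filterLaw hK hbdd, ennRowMul_barycenter]

theorem isTightMeasureSet_range_iterate_stepLaw [SFinite φ]
    [IsMarkovKernel (filterTransition φ hK)] (hbdd : ∀ᵐ y ∂φ, HasBoundedRows (K y))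
    (hP : ∀ i, ∑' j, meanMat K φ i j = 1) {l : E → ℝ≥0∞} (hl₀ : ∀ i, l i ≠ 0)
    (hl : ∑' i, l i ≠ ∞) (hlP : ennRowMul l (meanMat K φ) = l)
    (ν : ProbabilityMeasure (ProbVec E)) :
    IsTightMeasureSet (Set.range fun k =>
      ((stepLaw (filterTransition φ hK))^[k] ν : Measure (ProbVec E))) := by
  have hsemiconj : Function.Semiconj barycenter (stepLaw (filterTransition φ hK))
      (ennRowMul · (meanMat K φ)) := barycenter_stepLaw hK hbdd
  have hiterate (k : ℕ) : barycenter ((stepLaw (filterTransition φ hK))^[k] ν) =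
      (ennRowMul · (meanMat K φ))^[k] (barycenter ν) :=
    hsemiconj.iterate_right k ν
  refine ProbVec.isTightMeasureSet_of_lintegral_tsum_mass_compl_le fun ε hε => ?_
  obtain ⟨A, hA⟩ := exists_finset_forall_tsum_iterate_ennRowMul_le hP hl₀ hl hlP
    (tsum_barycenter ν ▸ one_ne_top) hε
  refine ⟨A, ?_⟩
  rintro _ ⟨k, rfl⟩
  exact (tsum_barycenter_subtype _ _).symm.trans_le (hiterate k ▸ hA k)

end FilterTransition

section RealMatrices

open ProbabilityTheory BoundedContinuousFunction

variable {E F : Type*} {M : F → E → E → ℝ}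

theorem IsBddCont.exists_coe_eq {f : ProbVec E → ℝ} (hf : IsBddCont f) :
    ∃ g : ProbVec E →ᵇ ℝ, ⇑g = f := by
  obtain ⟨hcont, C, hC⟩ := hf
  exact ⟨.ofNormedAddCommGroup f hcont C hC, rfl⟩

/-- The matrices `M y` with extended nonnegative entries; negative entries become zero. -/
noncomputable def ofRealMat (M : F → E → E → ℝ) (y : F) (i j : E) : ℝ≥0∞ :=
  ENNReal.ofReal (M y i j)

theorem hasBoundedRows_ofRealMat {y : F} (hMnn : ∀ i j, 0 ≤ M y i j)
    (hy : ∃ C : ℝ, ∀ (i : E) (s : Finset E), ∑ j ∈ s, M y i j ≤ C) :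
    HasBoundedRows (ofRealMat M y) := by
  obtain ⟨C, hC⟩ := hy
  refine ⟨ENNReal.ofReal C, ENNReal.ofReal_ne_top, fun i => ?_⟩
  rw [ENNReal.tsum_eq_iSup_sum]
  refine iSup_le fun s => ?_
  simp only [ofRealMat]
  rw [← ENNReal.ofReal_sum_of_nonneg fun j _ => hMnn i j]
  exact ENNReal.ofReal_le_ofReal (hC i s)

theorem rowMul_eq_toReal {y : F} (hMnn : ∀ i j, 0 ≤ M y i j) (μ : ProbVec E) (j : E) :
    rowMul M μ.1 y j = (ennRowMul μ.mass (ofRealMat M y) j).toReal := by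
  simp only [rowMul, ennRowMul, ofRealMat]
  rw [ENNReal.tsum_toReal_eq
    fun i => ENNReal.mul_ne_top (μ.mass_ne_top i) ENNReal.ofReal_ne_top]
  simp only [ENNReal.toReal_mul, ProbVec.toReal_mass, ENNReal.toReal_ofReal (hMnn _ j)]

theorem rowTot_rowMul_eq_toReal {y : F} (hMnn : ∀ i j, 0 ≤ M y i j)
    (hy : HasBoundedRows (ofRealMat M y)) (μ : ProbVec E) :
    rowTot (rowMul M μ.1 y) = (filterDensity (ofRealMat M) μ y).toReal := by
  rw [rowTot, filterDensity, ENNReal.tsum_toReal_eq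
    (ENNReal.ne_top_of_tsum_ne_top (hy.filterDensity_ne_top μ))]
  exact tsum_congr (rowMul_eq_toReal hMnn μ)

theorem filterStep_eq_filterUpdate {y : F} (hMnn : ∀ i j, 0 ≤ M y i j)
    (hy : HasBoundedRows (ofRealMat M y)) {μ : ProbVec E} (hμ : rowTot (rowMul M μ.1 y) ≠ 0) :
    filterStep M μ y = filterUpdate (ofRealMat M) μ y := by
  have hupdate (j : E) : (filterUpdate (ofRealMat M) μ y).1 j * rowTot (rowMul M μ.1 y) =
      rowMul M μ.1 y j := by
    rw [rowTot_rowMul_eq_toReal hMnn hy, rowMul_eq_toReal hMnn,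
      ← hy.mass_filterUpdate_mul_filterDensity, ENNReal.toReal_mul, ProbVec.toReal_mass]
  have hex : ∃ ν : ProbVec E, ∀ j, ν.1 j * rowTot (rowMul M μ.1 y) = rowMul M μ.1 y j :=
    ⟨_, hupdate⟩
  have hstep (j : E) : (filterStep M μ y).1 j * rowTot (rowMul M μ.1 y) = rowMul M μ.1 y j := by
    rw [filterStep, dif_pos hex]
    exact hex.choose_spec j
  exact Subtype.ext <| funext fun j =>
    mul_right_cancel₀ hμ ((hstep j).trans (hupdate j).symm)

variable [MeasurableSpace F] {φ : Measure F}

theorem filterKernel_eq_integral (hMnn : ∀ y i j, 0 ≤ M y i j)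
    (hbdd : ∀ᵐ y ∂φ, HasBoundedRows (ofRealMat M y)) (f : ProbVec E → ℝ) (μ : ProbVec E) :
    filterKernel M φ f μ =
      ∫ y, f (filterUpdate (ofRealMat M) μ y) * (filterDensity (ofRealMat M) μ y).toReal ∂φ := by
  refine integral_congr_ae ?_
  filter_upwards [hbdd] with y hy
  rw [← rowTot_rowMul_eq_toReal (hMnn y) hy]
  by_cases hμ : rowTot (rowMul M μ.1 y) = 0
  · rw [hμ, mul_zero, mul_zero]
  · rw [filterStep_eq_filterUpdate (hMnn y) hy hμ]

theorem measurable_ofRealMat (hMmeas : ∀ i j, Measurable fun y => M y i j) (i j : E) :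
    Measurable fun y => ofRealMat M y i j :=
  (hMmeas i j).ennreal_ofReal

theorem transMat_eq_toReal (hMmeas : ∀ i j, Measurable fun y => M y i j)
    (hMnn : ∀ y i j, 0 ≤ M y i j) (i j : E) :
    transMat M φ i j = (meanMat (ofRealMat M) φ i j).toReal :=
  integral_eq_lintegral_of_nonneg_ae (.of_forall fun y => hMnn y i j)
    (hMmeas i j).aestronglyMeasurable

theorem tsum_meanMat_eq_one (hMmeas : ∀ i j, Measurable fun y => M y i j)
    (hMnn : ∀ y i j, 0 ≤ M y i j) {i : E} (hi : HasSum (transMat M φ i) 1)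
    (hfin : ∀ j, meanMat (ofRealMat M) φ i j ≠ ∞) : ∑' j, meanMat (ofRealMat M) φ i j = 1 := by
  have htrans (j : E) : meanMat (ofRealMat M) φ i j = ENNReal.ofReal (transMat M φ i j) := by
    rw [transMat_eq_toReal hMmeas hMnn, ENNReal.ofReal_toReal (hfin j)]
  have hnn (j : E) : 0 ≤ transMat M φ i j := integral_nonneg fun y => hMnn y i j
  simp only [htrans]
  rw [← ENNReal.ofReal_tsum_of_nonneg hnn hi.summable, hi.tsum_eq, ENNReal.ofReal_one]

variable [Countable E] (hMmeas : ∀ i j, Measurable fun y => M y i j) (hMnn : ∀ y i j, 0 ≤ M y i j)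
  (hbdd : ∀ᵐ y ∂φ, HasBoundedRows (ofRealMat M y))
include hMmeas hMnn hbdd

theorem filterKernel_one (μ : ProbVec E) :
    filterKernel M φ (fun _ => 1) μ =
      (∑' i, μ.mass i * ∑' j, meanMat (ofRealMat M) φ i j).toReal := by
  have hK := measurable_ofRealMat hMmeas
  rw [filterKernel_eq_integral hMnn hbdd, ← lintegral_filterDensity hK]
  simp only [one_mul]
  exact integral_toReal (measurable_filterDensity_right hK μ).aemeasurable
    (hbdd.mono fun y hy => (hy.filterDensity_ne_top μ).lt_top)

theorem filterKernel_coe_apply (j : E) (μ : ProbVec E) :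
    filterKernel M φ (fun ν => ν.1 j) μ =
      (ennRowMul μ.mass (meanMat (ofRealMat M) φ) j).toReal := by
  have hK := measurable_ofRealMat hMmeas
  have hfin : ∀ᵐ y ∂φ, ennRowMul μ.mass (ofRealMat M y) j < ∞ := hbdd.mono fun y hy =>
    (ENNReal.ne_top_of_tsum_ne_top (hy.filterDensity_ne_top μ) j).lt_top
  rw [filterKernel_eq_integral hMnn hbdd, ← lintegral_ennRowMul_mass hK,
    ← integral_toReal (measurable_ennRowMul_mass_right hK μ j).aemeasurable hfin]
  refine integral_congr_ae ?_
  filter_upwards [hbdd] with y hy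
  rw [← ProbVec.toReal_mass, ← ENNReal.toReal_mul, hy.mass_filterUpdate_mul_filterDensity]

theorem ennRowMul_barycenter_eq_self_of_isPiInvariant
    (hPtrans : ∀ i, HasSum (transMat M φ i) 1) {𝕄 : ProbabilityMeasure (ProbVec E)}
    (h𝕄 : IsPiInvariant M φ 𝕄) :
    ennRowMul (barycenter 𝕄) (meanMat (ofRealMat M) φ) = barycenter 𝕄 := by
  refine ennRowMul_barycenter_eq_self (fun i hi => tsum_meanMat_eq_one hMmeas hMnn (hPtrans i)
    (ENNReal.ne_top_of_tsum_ne_top hi)) ?_ fun j => ?_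
  · simpa [filterKernel_one hMmeas hMnn hbdd] using
      h𝕄 (fun _ => 1) ⟨continuous_const, 1, by simp⟩
  · simpa only [filterKernel_coe_apply hMmeas hMnn hbdd] using
      h𝕄 (fun μ => μ.1 j) ⟨ProbVec.continuous_coe_apply j, 1, fun μ =>
        (abs_of_nonneg (μ.2.1 j)).trans_le (ProbVec.coe_le_one μ j)⟩

variable [SFinite φ] [IsMarkovKernel (filterTransition φ (measurable_ofRealMat hMmeas))]

theorem filterKernel_coe (hκ : IsFeller (filterTransition φ (measurable_ofRealMat hMmeas)))
    (f : ProbVec E →ᵇ ℝ) :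
    filterKernel M φ f = hκ.op f := by
  funext μ
  rw [filterKernel_eq_integral hMnn hbdd]
  exact (integral_filterLaw (measurable_ofRealMat hMmeas) hbdd μ f.continuous.measurable).symm

theorem integral_iterate_filterKernel (f : ProbVec E →ᵇ ℝ) (k : ℕ)
    (ν : ProbabilityMeasure (ProbVec E)) :
    ∫ μ, ((filterKernel M φ)^[k] f) μ ∂(ν : Measure (ProbVec E)) =
      ∫ μ, f μ ∂((stepLaw (filterTransition φ (measurable_ofRealMat hMmeas)))^[k] ν :
        Measure (ProbVec E)) := by
  have hκ := isFeller_filterTransition (measurable_ofRealMat hMmeas) hbdd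
  have hsemiconj : Function.Semiconj (fun f : ProbVec E →ᵇ ℝ => ⇑f) hκ.op (filterKernel M φ) :=
    fun f => (filterKernel_coe hMmeas hMnn hbdd hκ f).symm
  rw [← hκ.integral_iterate_op, ← (hsemiconj.iterate_right k).eq]

theorem isPiInvariant_of_invariant {ρ : ProbabilityMeasure (ProbVec E)}
    (hρ : (filterTransition φ (measurable_ofRealMat hMmeas)).Invariant
      (ρ : Measure (ProbVec E))) :
    IsPiInvariant M φ ρ := by
  intro f hf
  obtain ⟨f, rfl⟩ := hf.exists_coe_eq
  have hstep : stepLaw (filterTransition φ (measurable_ofRealMat hMmeas)) ρ = ρ := Subtype.ext hρ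
  simpa only [Function.iterate_one, hstep] using
    integral_iterate_filterKernel hMmeas hMnn hbdd f 1 ρ

end RealMatrices

theorem cesaro_convergence_to_unique_invariant_measure_general
    {E : Type*} [Countable E] [DecidableEq E] {F : Type*} [MeasurableSpace F]
    (φ : Measure F) [SFinite φ] (M : F → E → E → ℝ)
    (hMmeas : ∀ i j, Measurable fun y => M y i j) (hMnn : ∀ y i j, 0 ≤ M y i j)
    (hMbd : ∀ᵐ y ∂φ, ∃ C : ℝ, ∀ (i : E) (s : Finset E), ∑ j ∈ s, M y i j ≤ C)
    (hPtrans : ∀ i, HasSum (fun j => transMat M φ i j) 1)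
    (hPirr : ∀ i j : E, ∃ n : ℕ, 0 < matPow (transMat M φ) n i j)
    (𝕄 : ProbabilityMeasure (ProbVec E)) (h𝕄 : IsPiInvariant M φ 𝕄)
    (huniq : ∀ 𝕄' : ProbabilityMeasure (ProbVec E), IsPiInvariant M φ 𝕄' → 𝕄' = 𝕄)
    (𝕄₀ : ProbabilityMeasure (ProbVec E)) (f : ProbVec E → ℝ) (hf : IsBddCont f) :
    Tendsto (fun n : ℕ => (n : ℝ)⁻¹ * ∑ k ∈ Finset.Icc 1 n,
        ∫ μ, ((filterKernel M φ)^[k] f) μ ∂(𝕄₀ : Measure (ProbVec E)))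
      atTop (nhds (∫ μ, f μ ∂(𝕄 : Measure (ProbVec E)))) := by
  have hK := measurable_ofRealMat hMmeas
  have hbdd : ∀ᵐ y ∂φ, HasBoundedRows (ofRealMat M y) :=
    hMbd.mono fun y hy => hasBoundedRows_ofRealMat (hMnn y) hy
  have hinv := ennRowMul_barycenter_eq_self_of_isPiInvariant hMmeas hMnn hbdd hPtrans h𝕄
  have hsum : ∑' i, barycenter 𝕄 i = 1 := tsum_barycenter 𝕄
  have hpos (i : E) : barycenter 𝕄 i ≠ 0 := by
    refine ne_zero_of_ennRowMul_eq_self (fun i j => ?_) (hsum ▸ one_ne_zero) hinv i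
    simpa only [← transMat_eq_toReal hMmeas hMnn] using hPirr i j
  have hfin := ne_top_of_ennRowMul_eq_self hpos (hsum ▸ one_ne_top) hinv
  have hP (i : E) := tsum_meanMat_eq_one hMmeas hMnn (hPtrans i) (hfin i)
  have := isMarkovKernel_filterTransition hK hP
  obtain ⟨f, rfl⟩ := hf.exists_coe_eq
  have htight := isTightMeasureSet_range_iterate_stepLaw hK hbdd hP hpos (hsum ▸ one_ne_top) hinv
    (stepLaw (filterTransition φ hK) 𝕄₀)
  simpa only [birkhoffAverage_map_eq_smul_sum_Icc, smul_eq_mul,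
    ← integral_iterate_filterKernel hMmeas hMnn hbdd] using
    (isFeller_filterTransition hK hbdd).tendsto_birkhoffAverage_integral htight
      (fun ρ hρ => huniq ρ (isPiInvariant_of_invariant hMmeas hMnn hbdd hρ)) f

/-- If the filter transition kernel `Π` has a unique invariant probability measure `𝕄`,
then the Cesàro averages of the laws of the filter converge weakly to `𝕄`:
`(1/n) ∑_{k=1}^n ∫ Π^k f d𝕄₀ → ∫ f d𝕄` for every bounded continuous `f`. -/
theorem cesaro_convergence_to_unique_invariant_measure
    {E : Type*} [Countable E] [Nonempty E] [DecidableEq E]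
    {F : Type*} [TopologicalSpace F] [PolishSpace F] [MeasurableSpace F] [BorelSpace F]
    (φ : Measure F) [SigmaFinite φ]
    (M : F → E → E → ℝ)
    (hMmeas : ∀ i j, Measurable fun y => M y i j)
    (hMnn : ∀ y i j, 0 ≤ M y i j)
    (hMbd : ∀ᵐ y ∂φ, ∃ C : ℝ, ∀ (i : E) (s : Finset E), ∑ j ∈ s, M y i j ≤ C)
    (hPtrans : ∀ i, HasSum (fun j => transMat M φ i j) 1)
    (hPirr : ∀ i j : E, ∃ n : ℕ, 0 < matPow (transMat M φ) n i j)
    (lam : ProbVec E)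
    (hlamInv : ∀ j, ∑' i, (lam : E → ℝ) i * transMat M φ i j = (lam : E → ℝ) j)
    (hlamUniq : ∀ ρ : ProbVec E,
      (∀ j, ∑' i, (ρ : E → ℝ) i * transMat M φ i j = (ρ : E → ℝ) j) → ρ = lam)
    (𝕄 : ProbabilityMeasure (ProbVec E)) (h𝕄 : IsPiInvariant M φ 𝕄)
    (huniq : ∀ 𝕄' : ProbabilityMeasure (ProbVec E), IsPiInvariant M φ 𝕄' → 𝕄' = 𝕄) :
    ∀ (𝕄₀ : ProbabilityMeasure (ProbVec E)) (f : ProbVec E → ℝ), IsBddCont f →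
      Tendsto (fun n : ℕ => (n : ℝ)⁻¹ * ∑ k ∈ Finset.Icc 1 n,
          ∫ μ, ((filterKernel M φ)^[k] f) μ ∂(𝕄₀ : Measure (ProbVec E)))
        atTop (nhds (∫ μ, f μ ∂(𝕄 : Measure (ProbVec E)))) := by
  exact cesaro_convergence_to_unique_invariant_measure_general φ M hMmeas hMnn hMbd hPtrans hPirr
    𝕄 h𝕄 huniq
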